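/- Wigner support and sign recovery (Theorem rec_wgn). Fix n ∈ ℕ, λ > 0, A ≥ 1, ρ ∈ (0,1] with ρn ∈ ℕ, and let x ∈ ℝⁿ be a (ρ,A)-sparse vector. Let Y = W + λ x xᵀ with W ~ GOE(n), and let W̃ ~ GOE(n) be independent of W. Set Y' = (Y + W̃)/√2, Y'' = (Y − W̃)/√2. Let ℓ ∈ ℕ₊, v* = argmax_{v ∈ I_{n,ℓ}} vᵀ Y' v where I_{n,ℓ} = {v ∈ {−1,0,1}ⁿ : ‖v‖₀ = ℓ}, let z = Y'' v*, and define x̄ ∈ {−1,0,1}ⁿ by x̄ⱼ = sign(zⱼ)·1{|zⱼ| > λℓ/(4A²ρn)}. Suppose ρ ≤ λ²/(338 A⁴ log n) and ℓ lies in the interval [338 A⁴ ρ² n (log n)/λ², ρn]. Then with probability at least 1 − 4 exp(−(λ²/(288 A⁴)) · ℓ/(ρ² n)) one has supp(x̄) = supp(x) and either sign(x̄) = sign(x) or sign(x̄) = −sign(x) (entrywise). -/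

import Mathlib

open MeasureTheory ProbabilityTheory Filter Matrix

/-- A vector `x ∈ ℝⁿ` is `(ρ,A)`-sparse if `‖x‖₂ = 1`, `‖x‖₀ = ρn`, and every
nonzero entry satisfies `1/(A√(ρn)) ≤ |xᵢ| ≤ A/√(ρn)`. -/
def SparseVec (n : ℕ) (ρ A : ℝ) (x : Fin n → ℝ) : Prop :=
  (∑ i, x i ^ 2) = 1 ∧
  ({i | x i ≠ 0}.ncard : ℝ) = ρ * n ∧
  ∀ i, x i ≠ 0 → 1 / (A * Real.sqrt (ρ * n)) ≤ |x i| ∧ |x i| ≤ A / Real.sqrt (ρ * n)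


/-- Matrices over `ℝ` carry the product (entrywise) measurable structure. -/
instance matrixMeasurableSpace {m n : Type*} :
    MeasurableSpace (Matrix m n ℝ) :=
  (inferInstance : MeasurableSpace (m → n → ℝ))

/-- The Gaussian orthogonal ensemble `GOE(n)`: a random symmetric `n×n` matrix with
independent entries `Wᵢᵢ ~ N(0, 2/n)` on the diagonal and `Wᵢⱼ = Wⱼᵢ ~ N(0, 1/n)`
off the diagonal, realized as a pushforward of i.i.d. standard Gaussians. -/
noncomputable def GOE (n : ℕ) : Measure (Matrix (Fin n) (Fin n) ℝ) :=
  (Measure.pi fun _ : Fin n × Fin n => gaussianReal 0 1).map fun g =>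
    Matrix.of fun i j =>
      if i = j then Real.sqrt (2 / n) * g (i, i)
      else if i < j then Real.sqrt (1 / n) * g (i, j)
      else Real.sqrt (1 / n) * g (j, i)

/-- The search set `I_{n,ℓ} = {v ∈ {−1,0,1}ⁿ : ‖v‖₀ = ℓ}`. -/
def signVecs (n ℓ : ℕ) : Set (Fin n → ℝ) :=
  {v | (∀ i, v i = -1 ∨ v i = 0 ∨ v i = 1) ∧ {i | v i ≠ 0}.ncard = ℓ}

/-- The test statistic `T = max_{v ∈ I_{n,ℓ}} vᵀ M v`. -/
noncomputable def Tstat (n ℓ : ℕ) (M : Matrix (Fin n) (Fin n) ℝ) : ℝ :=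
  sSup ((fun v => v ⬝ᵥ M.mulVec v) '' signVecs n ℓ)

/-!
The pair `((Y + W̃) / √2, (Y - W̃) / √2)` is the image of `(W, W̃)`, shifted by the spike, under an
orthogonal involution that preserves the law of two independent `GOE` matrices. Hence `Y'` and `Y''`
are spiked matrices with independent noise and spike strength `λ / √2`.

A form `uᵀWv` is Gaussian with variance at most `2 ‖u‖² ‖v‖² / n`, so a union bound over the at most
`2 n ^ ℓ` test vectors makes the noise small on all of them. Comparing the maximizer `v*` of `vᵀY'v`
with a test vector that follows the signs of `x` on `ℓ` support coordinates then bounds the overlap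
`|xᵀv*|` from below. Since `v*` is independent of the noise in `Y''`, a second union bound, over
coordinates, shows that `Y'' v*` is within the threshold of a multiple of `x` whose nonzero entries
are at least twice the threshold.
-/

section GeneralProbability

open scoped NNReal

variable {Ω Ω₂ ι : Type*} [MeasurableSpace Ω] [MeasurableSpace Ω₂]

lemma mul_le_measure_prod_setOf_mem (μ : Measure Ω) (ν : Measure Ω₂) [SFinite ν]
    {E : Set Ω} {G : Ω → Set Ω₂} {p q : ENNReal} (hE : p ≤ μ E) (hG : ∀ a ∈ E, q ≤ ν (G a)) :
    p * q ≤ (μ.prod ν) {ω | ω.1 ∈ E ∧ ω.2 ∈ G ω.1} := by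
  set S := {ω : Ω × Ω₂ | ω.1 ∈ E ∧ ω.2 ∈ G ω.1}
  -- `S` need not be measurable, so Tonelli and Markov are applied to its measurable hull.
  have hull : MeasurableSet (toMeasurable (μ.prod ν) S) := measurableSet_toMeasurable _ _
  have fiber : E ⊆ {a | q ≤ ν (Prod.mk a ⁻¹' toMeasurable (μ.prod ν) S)} := fun a ha =>
    (hG a ha).trans (measure_mono fun _ hb => subset_toMeasurable _ _ ⟨ha, hb⟩)
  calc p * q ≤ q * μ {a | q ≤ ν (Prod.mk a ⁻¹' toMeasurable (μ.prod ν) S)} := by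
        rw [mul_comm]
        gcongr
        exact hE.trans (measure_mono fiber)
    _ ≤ ∫⁻ a, ν (Prod.mk a ⁻¹' toMeasurable (μ.prod ν) S) ∂μ :=
        mul_meas_ge_le_lintegral (measurable_measure_prodMk_left hull) q
    _ = (μ.prod ν) S := by rw [← Measure.prod_apply hull, measure_toMeasurable]

lemma one_sub_add_le_measure_prod_setOf_mem (μ : Measure Ω) (ν : Measure Ω₂) [SFinite ν]
    {E : Set Ω} {G : Ω → Set Ω₂} {p q : ENNReal} (hE : 1 - p ≤ μ E)
    (hG : ∀ a ∈ E, 1 - q ≤ ν (G a)) :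
    1 - (p + q) ≤ (μ.prod ν) {ω | ω.1 ∈ E ∧ ω.2 ∈ G ω.1} := by
  refine le_trans ?_ (mul_le_measure_prod_setOf_mem μ ν hE hG)
  calc 1 - (p + q) = (1 - p) - q := (tsub_tsub _ _ _).symm
    _ ≤ (1 - p) - (1 - p) * q := tsub_le_tsub_left (mul_le_of_le_one_left' tsub_le_self) _
    _ = (1 - p) * (1 - q) := by
        rw [ENNReal.mul_sub fun _ _ => ne_top_of_le_ne_top ENNReal.one_ne_top tsub_le_self,
          mul_one]

lemma one_sub_le_measure_forall_lt [Finite ι] {μ : Measure Ω} [IsProbabilityMeasure μ]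
    {X : ι → Ω → ℝ} {c : ℝ≥0} (hX : ∀ i, HasSubgaussianMGF (X i) c μ) {t : ℝ} (ht : 0 ≤ t) :
    1 - ENNReal.ofReal (Nat.card ι * Real.exp (-t ^ 2 / (2 * c))) ≤
      μ {ω | ∀ i, X i ω < t} := by
  have := Fintype.ofFinite ι
  have tail (i : ι) : μ {ω | t ≤ X i ω} ≤ ENNReal.ofReal (Real.exp (-t ^ 2 / (2 * c))) := by
    rw [← ofReal_measureReal]
    exact ENNReal.ofReal_le_ofReal ((hX i).measure_ge_le ht)
  have union : μ {ω | ∀ i, X i ω < t}ᶜ ≤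
      ENNReal.ofReal (Nat.card ι * Real.exp (-t ^ 2 / (2 * c))) := by
    calc μ {ω | ∀ i, X i ω < t}ᶜ = μ (⋃ i, {ω | t ≤ X i ω}) := by
          congr 1
          ext ω
          simp
      _ ≤ ∑ i, μ {ω | t ≤ X i ω} := measure_iUnion_fintype_le _ _
      _ ≤ ∑ _i : ι, ENNReal.ofReal (Real.exp (-t ^ 2 / (2 * c))) :=
          Finset.sum_le_sum fun i _ => tail i
      _ = ENNReal.ofReal (Nat.card ι * Real.exp (-t ^ 2 / (2 * c))) := by
          rw [Finset.sum_const, Finset.card_univ, ← Nat.card_eq_fintype_card, nsmul_eq_mul,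
            ENNReal.ofReal_mul (Nat.cast_nonneg _), ENNReal.ofReal_natCast]
  rw [tsub_le_iff_right, ← measure_univ (μ := μ)]
  exact (measure_univ_le_add_compl _).trans (by gcongr)

lemma hasSubgaussianMGF_mono {μ : Measure Ω} {X : Ω → ℝ} {c d : ℝ≥0}
    (hX : HasSubgaussianMGF X c μ) (hcd : c ≤ d) : HasSubgaussianMGF X d μ where
  integrable_exp_mul := hX.integrable_exp_mul
  mgf_le t := (hX.mgf_le t).trans (by gcongr)

end GeneralProbability

section StandardGaussian

open scoped NNReal

variable {ι : Type*} [Fintype ι]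

lemma hasSubgaussianMGF_id_gaussianReal (v : ℝ≥0) :
    HasSubgaussianMGF id v (gaussianReal 0 v) where
  integrable_exp_mul := integrable_exp_mul_gaussianReal
  mgf_le t := by simp [mgf_id_gaussianReal]

lemma hasSubgaussianMGF_sum_mul_pi_gaussianReal (c : ι → ℝ) {s : ℝ≥0}
    (hs : ∑ i, c i ^ 2 ≤ (s : ℝ)) :
    HasSubgaussianMGF (fun g : ι → ℝ => ∑ i, c i * g i) s
      (Measure.pi fun _ : ι => gaussianReal 0 1) := by
  have coord (i : ι) : HasSubgaussianMGF (fun g : ι → ℝ => g i) 1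
      (Measure.pi fun _ : ι => gaussianReal 0 1) := by
    refine .of_map (X := id) (measurable_pi_apply i).aemeasurable ?_
    rw [(measurePreserving_eval (fun _ : ι => gaussianReal 0 1) i).map_eq]
    exact hasSubgaussianMGF_id_gaussianReal 1
  have indep : iIndepFun (fun i (g : ι → ℝ) => c i * g i)
      (Measure.pi fun _ : ι => gaussianReal 0 1) :=
    iIndepFun_pi (X := fun i y => c i * y) fun _ => by fun_prop
  refine hasSubgaussianMGF_mono
    (.sum_of_iIndepFun indep fun i _ => (coord i).const_mul (c i)) ?_
  rw [← NNReal.coe_le_coe, NNReal.coe_sum]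
  refine le_of_eq_of_le (Finset.sum_congr rfl fun i _ => ?_) hs
  exact mul_one (c i ^ 2)

lemma isGaussian_pi_gaussianReal : IsGaussian (Measure.pi fun _ : ι => gaussianReal 0 1) := by
  have law : HasGaussianLaw (fun (g : ι → ℝ) i => g i)
      (Measure.pi fun _ : ι => gaussianReal 0 1) := by
    refine iIndepFun.hasGaussianLaw (fun i => ⟨?_⟩)
      (iIndepFun_pi (X := fun _ => id) fun _ => aemeasurable_id)
    rw [(measurePreserving_eval (fun _ : ι => gaussianReal 0 1) i).map_eq]
    infer_instance
  simpa using law.isGaussian_map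

lemma integral_id_pi_gaussianReal : (Measure.pi fun _ : ι => gaussianReal 0 1)[id] = 0 := by
  ext i
  have := isGaussian_pi_gaussianReal (ι := ι)
  rw [eval_integral fun j => IsGaussian.integrable_id.eval j]
  simp [integral_eval]

end StandardGaussian

section HadamardTransform

variable {E F : Type*} [AddCommGroup E] [Module ℝ E] [AddCommGroup F] [Module ℝ F]

/-- The orthogonal involution `(a, b) ↦ ((a + b) / √2, (a - b) / √2)` of `E × E`. It maps a pair of
independent copies of a centered Gaussian to another such pair, which is how one noisy observation
is split into two with independent noise. -/
noncomputable def hadamardTransform (p : E × E) : E × E :=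
  ((√2)⁻¹ • (p.1 + p.2), (√2)⁻¹ • (p.1 - p.2))

lemma hadamardTransform_involutive : Function.Involutive (hadamardTransform (E := E)) := by
  have half : (√2)⁻¹ * (√2)⁻¹ = (2⁻¹ : ℝ) := by
    rw [← mul_inv, Real.mul_self_sqrt zero_le_two]
  rintro ⟨a, b⟩
  ext
  all_goals
    simp only [hadamardTransform, ← smul_add, ← smul_sub, smul_smul, half]
    module

lemma hadamardTransform_prodMap (L : E →ₗ[ℝ] F) (p : E × E) :
    hadamardTransform (Prod.map L L p) = Prod.map L L (hadamardTransform p) := by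
  simp [hadamardTransform]

lemma hadamardTransform_add_diag_left (p : E × E) (a : E) :
    hadamardTransform (p + (a, 0)) = hadamardTransform p + ((√2)⁻¹ • a, (√2)⁻¹ • a) := by
  ext <;> simp only [hadamardTransform, Prod.fst_add, Prod.snd_add] <;> module

end HadamardTransform

lemma map_hadamardTransform_prod_self {E : Type*} [NormedAddCommGroup E] [NormedSpace ℝ E]
    [CompleteSpace E] [SecondCountableTopology E] [MeasurableSpace E] [BorelSpace E]
    {μ : Measure E} [IsGaussian μ] (hμ : μ[id] = 0) :
    (μ.prod μ).map hadamardTransform = μ.prod μ := by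
  have rotation := IsGaussian.map_rotation_eq_self hμ (-(Real.pi / 4))
  have swap_rotation : hadamardTransform (E := E) =
      Prod.swap ∘ ContinuousLinearMap.rotation (-(Real.pi / 4)) := by
    ext p
    · simp [hadamardTransform, ContinuousLinearMap.rotation_apply, Real.sqrt_div_self]
    · simp [hadamardTransform, ContinuousLinearMap.rotation_apply, Real.sqrt_div_self]
      module
  rw [swap_rotation, ← Measure.map_map measurable_swap (by fun_prop), rotation, Measure.prod_swap]

section SumUpperTriangle

variable {ι M : Type*} [LinearOrder ι] [Fintype ι] [AddCommMonoid M]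

lemma sum_sum_eq_sum_upperTriangle (f : ι → ι → M) :
    ∑ i, ∑ j, f i j = ∑ p : ι × ι, if p.1 = p.2 then f p.1 p.1
      else if p.1 < p.2 then f p.1 p.2 + f p.2 p.1 else 0 := by
  have split (p : ι × ι) : (if p.1 = p.2 then f p.1 p.1
      else if p.1 < p.2 then f p.1 p.2 + f p.2 p.1 else 0) =
      (if p.1 ≤ p.2 then f p.1 p.2 else 0) + if p.1 < p.2 then f p.2 p.1 else 0 := by
    rcases lt_trichotomy p.1 p.2 with h | h | h
    · simp [h, h.ne, h.le]
    · simp [h]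
    · simp [h.ne', h.not_gt, h.not_ge]
  have swap : ∑ p : ι × ι, (if p.1 < p.2 then f p.2 p.1 else 0) =
      ∑ p : ι × ι, if p.2 < p.1 then f p.1 p.2 else 0 :=
    (Equiv.prodComm ι ι).sum_comp fun p => if p.2 < p.1 then f p.1 p.2 else 0
  simp_rw [split, Finset.sum_add_distrib]
  rw [swap, ← Finset.sum_add_distrib, Fintype.sum_prod_type]
  refine Finset.sum_congr rfl fun i _ => Finset.sum_congr rfl fun j _ => ?_
  rcases le_or_gt i j with h | h
  · simp [h, h.not_gt]
  · simp [h, h.not_ge]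

end SumUpperTriangle

section GaussianOrthogonalEnsemble

open scoped NNReal

variable {n : ℕ}

/-- The symmetric matrix built from an array `g` in the definition of `GOE n`, as a linear function
of `g`; only the entries of `g` on and above the diagonal are read. -/
noncomputable def goeMatrix (n : ℕ) : (Fin n × Fin n → ℝ) →ₗ[ℝ] Matrix (Fin n) (Fin n) ℝ where
  toFun g := Matrix.of fun i j =>
    if i = j then Real.sqrt (2 / n) * g (i, i)
    else if i < j then Real.sqrt (1 / n) * g (i, j)
    else Real.sqrt (1 / n) * g (j, i)
  map_add' g h := by
    ext i j
    simp only [of_apply, Pi.add_apply, Matrix.add_apply]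
    split_ifs <;> ring
  map_smul' r g := by
    ext i j
    simp only [of_apply, Pi.smul_apply, Matrix.smul_apply, smul_eq_mul, RingHom.id_apply]
    split_ifs <;> ring

lemma GOE_eq_map_goeMatrix :
    GOE n = (Measure.pi fun _ : Fin n × Fin n => gaussianReal 0 1).map (goeMatrix n) :=
  rfl

lemma measurable_goeMatrix : Measurable (goeMatrix n) := by
  refine measurable_pi_lambda _ fun i => measurable_pi_lambda _ fun j => ?_
  simp only [goeMatrix, LinearMap.coe_mk, AddHom.coe_mk, of_apply]
  split_ifs <;> fun_prop

instance isProbabilityMeasure_GOE : IsProbabilityMeasure (GOE n) :=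
  Measure.isProbabilityMeasure_map measurable_goeMatrix.aemeasurable

lemma measurable_matrix_apply (i j : Fin n) :
    Measurable fun W : Matrix (Fin n) (Fin n) ℝ => W i j :=
  (measurable_pi_apply j).comp (measurable_pi_apply i)

lemma measurable_hadamardTransform_matrix :
    Measurable (hadamardTransform (E := Matrix (Fin n) (Fin n) ℝ)) := by
  have fst_apply (i j) : Measurable fun p : Matrix (Fin n) (Fin n) ℝ × Matrix (Fin n) (Fin n) ℝ =>
      p.1 i j := (measurable_matrix_apply i j).comp measurable_fst
  have snd_apply (i j) : Measurable fun p : Matrix (Fin n) (Fin n) ℝ × Matrix (Fin n) (Fin n) ℝ =>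
      p.2 i j := (measurable_matrix_apply i j).comp measurable_snd
  refine .prodMk ?_ ?_
  · exact measurable_pi_lambda _ fun i => measurable_pi_lambda _ fun j =>
      ((fst_apply i j).add (snd_apply i j)).const_smul (√2)⁻¹
  · exact measurable_pi_lambda _ fun i => measurable_pi_lambda _ fun j =>
      ((fst_apply i j).sub (snd_apply i j)).const_smul (√2)⁻¹

lemma map_hadamardTransform_GOE_prod :
    ((GOE n).prod (GOE n)).map hadamardTransform = (GOE n).prod (GOE n) := by
  have := isGaussian_pi_gaussianReal (ι := Fin n × Fin n)
  have intertwine : hadamardTransform ∘ Prod.map (goeMatrix n) (goeMatrix n) =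
      Prod.map (goeMatrix n) (goeMatrix n) ∘ hadamardTransform :=
    funext (hadamardTransform_prodMap (goeMatrix n))
  have prod_map := (measurable_goeMatrix (n := n)).prodMap (measurable_goeMatrix (n := n))
  rw [GOE_eq_map_goeMatrix, Measure.map_prod_map _ _ measurable_goeMatrix measurable_goeMatrix,
    Measure.map_map measurable_hadamardTransform_matrix prod_map, intertwine,
    ← Measure.map_map prod_map (by unfold hadamardTransform; fun_prop),
    map_hadamardTransform_prod_self integral_id_pi_gaussianReal]

lemma GOE_prod_preimage_hadamardTransform
    (S : Set (Matrix (Fin n) (Fin n) ℝ × Matrix (Fin n) (Fin n) ℝ)) :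
    ((GOE n).prod (GOE n)) (hadamardTransform ⁻¹' S) = ((GOE n).prod (GOE n)) S := by
  -- An involutive measurable map is a measurable equivalence, so `S` need not be measurable.
  let e := MeasurableEquiv.ofInvolutive _ hadamardTransform_involutive
    (measurable_hadamardTransform_matrix (n := n))
  calc ((GOE n).prod (GOE n)) (e ⁻¹' S) = ((GOE n).prod (GOE n)).map e S := (e.map_apply S).symm
    _ = ((GOE n).prod (GOE n)) S := congrArg (· S) map_hadamardTransform_GOE_prod

/-- The coefficients of `u ⬝ᵥ goeMatrix n g *ᵥ v` as a linear form in the array `g`. -/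
noncomputable def goeBilinCoeff (u v : Fin n → ℝ) (p : Fin n × Fin n) : ℝ :=
  if p.1 = p.2 then √(2 / n) * (u p.1 * v p.1)
  else if p.1 < p.2 then √(1 / n) * (u p.1 * v p.2 + u p.2 * v p.1) else 0

lemma dotProduct_goeMatrix_mulVec (u v : Fin n → ℝ) (g : Fin n × Fin n → ℝ) :
    u ⬝ᵥ goeMatrix n g *ᵥ v = ∑ p, goeBilinCoeff u v p * g p := by
  have expand : u ⬝ᵥ goeMatrix n g *ᵥ v = ∑ i, ∑ j, u i * goeMatrix n g i j * v j := by
    simp only [dotProduct, mulVec, Finset.mul_sum, mul_assoc]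
  rw [expand, sum_sum_eq_sum_upperTriangle]
  refine Finset.sum_congr rfl fun ⟨i, j⟩ _ => ?_
  simp only [goeBilinCoeff, goeMatrix, LinearMap.coe_mk, AddHom.coe_mk, of_apply]
  rcases lt_trichotomy i j with h | rfl | h
  · simp only [h.ne, h.ne', h, h.not_gt, if_true, if_false]
    ring
  · simp only [if_true]
    ring
  · simp only [h.ne', h.not_gt, if_false, zero_mul]

lemma sum_goeBilinCoeff_sq (u v : Fin n → ℝ) :
    ∑ p, goeBilinCoeff u v p ^ 2 = ((u ⬝ᵥ u) * (v ⬝ᵥ v) + (u ⬝ᵥ v) ^ 2) / n := by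
  have sqrt_two_div : √(2 / n) ^ 2 = (2 / n : ℝ) := Real.sq_sqrt (by positivity)
  have sqrt_one_div : √(1 / n) ^ 2 = (1 / n : ℝ) := Real.sq_sqrt (by positivity)
  calc ∑ p, goeBilinCoeff u v p ^ 2
      = ∑ i, ∑ j, (u i * u i * (v j * v j) + u i * v i * (u j * v j)) / n := by
        rw [sum_sum_eq_sum_upperTriangle]
        refine Finset.sum_congr rfl fun p _ => ?_
        unfold goeBilinCoeff
        split_ifs
        · rw [mul_pow, sqrt_two_div]
          ring
        · rw [mul_pow, sqrt_one_div]
          ring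
        · exact zero_pow two_ne_zero
    _ = ((u ⬝ᵥ u) * (v ⬝ᵥ v) + (u ⬝ᵥ v) ^ 2) / n := by
        simp only [dotProduct, sq, Finset.sum_mul_sum, ← Finset.sum_add_distrib, Finset.sum_div]

lemma sum_goeBilinCoeff_sq_le (u v : Fin n → ℝ) :
    ∑ p, goeBilinCoeff u v p ^ 2 ≤ 2 * ((u ⬝ᵥ u) * (v ⬝ᵥ v)) / n := by
  have cauchy_schwarz : (u ⬝ᵥ v) ^ 2 ≤ (u ⬝ᵥ u) * (v ⬝ᵥ v) := by
    simpa only [dotProduct, sq] using Finset.sum_mul_sq_le_sq_mul_sq Finset.univ u v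
  rw [sum_goeBilinCoeff_sq]
  gcongr
  linarith

lemma hasSubgaussianMGF_dotProduct_mulVec_GOE (u v : Fin n → ℝ) {s : ℝ≥0}
    (hs : (u ⬝ᵥ u) * (v ⬝ᵥ v) ≤ s) :
    HasSubgaussianMGF (fun W => u ⬝ᵥ W *ᵥ v) (2 * s / n) (GOE n) := by
  have measurable_form : Measurable fun W : Matrix (Fin n) (Fin n) ℝ => u ⬝ᵥ W *ᵥ v :=
    Finset.measurable_fun_sum _ fun i _ => .const_mul (Finset.measurable_fun_sum Finset.univ
      fun j _ => (measurable_matrix_apply i j).mul_const (v j)) (u i)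
  rw [← HasSubgaussianMGF.id_map_iff measurable_form.aemeasurable, GOE_eq_map_goeMatrix,
    Measure.map_map measurable_form measurable_goeMatrix,
    HasSubgaussianMGF.id_map_iff (measurable_form.comp measurable_goeMatrix).aemeasurable]
  have form_eq : (fun W => u ⬝ᵥ W *ᵥ v) ∘ goeMatrix n = fun g => ∑ p, goeBilinCoeff u v p * g p :=
    funext (dotProduct_goeMatrix_mulVec u v)
  rw [form_eq]
  refine hasSubgaussianMGF_sum_mul_pi_gaussianReal _ ((sum_goeBilinCoeff_sq_le u v).trans ?_)
  push_cast
  gcongr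

lemma one_sub_le_GOE_forall_dotProduct_mulVec_lt {ι : Type*} [Finite ι] (u v : ι → Fin n → ℝ)
    {s : ℝ≥0} (hs : ∀ i, (u i ⬝ᵥ u i) * (v i ⬝ᵥ v i) ≤ s) {t : ℝ} (ht : 0 ≤ t) :
    1 - ENNReal.ofReal (Nat.card ι * Real.exp (-(n * t ^ 2 / (4 * s)))) ≤
      GOE n {W | ∀ i, u i ⬝ᵥ W *ᵥ v i < t} := by
  convert one_sub_le_measure_forall_lt
    (fun i => hasSubgaussianMGF_dotProduct_mulVec_GOE (u i) (v i) (hs i)) ht using 5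
  push_cast
  rw [neg_div, ← mul_div_assoc, div_div_eq_mul_div, mul_comm (n : ℝ), ← mul_assoc]
  norm_num

end GaussianOrthogonalEnsemble

section RealSign

lemma realSign_mul (a b : ℝ) : Real.sign (a * b) = Real.sign a * Real.sign b := by
  rcases lt_trichotomy a 0 with ha | rfl | ha <;> rcases lt_trichotomy b 0 with hb | rfl | hb <;>
    simp [*, Real.sign_of_neg, Real.sign_of_pos, mul_pos_of_neg_of_neg, mul_neg_of_neg_of_pos,
      mul_neg_of_pos_of_neg]

lemma mul_realSign_self (a : ℝ) : a * Real.sign a = |a| := by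
  rcases lt_trichotomy a 0 with ha | rfl | ha <;>
    simp [*, Real.sign_of_neg, Real.sign_of_pos, abs_of_neg, abs_of_pos]

lemma realSign_add_of_abs_lt {w a : ℝ} (h : |w| < |a|) : Real.sign (w + a) = Real.sign a := by
  rcases lt_or_ge a 0 with ha | ha
  · rw [abs_of_neg ha, abs_lt] at h
    rw [Real.sign_of_neg ha, Real.sign_of_neg (by linarith)]
  · rw [abs_of_nonneg ha, abs_lt] at h
    rw [Real.sign_of_pos (show 0 < a by linarith), Real.sign_of_pos (by linarith)]

end RealSign

section SignVectors

variable {n ℓ : ℕ}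

lemma dotProduct_self_of_mem_signVecs {v : Fin n → ℝ} (hv : v ∈ signVecs n ℓ) :
    v ⬝ᵥ v = ℓ := by
  have sq_entry (i : Fin n) : v i * v i = if v i ≠ 0 then 1 else 0 := by
    rcases hv.1 i with h | h | h <;> simp [h]
  rw [← hv.2, Set.ncard_eq_toFinset_card', Set.toFinset_ofPred]
  simp only [dotProduct, sq_entry, Finset.sum_boole]

lemma signVecs_subset_coe_biUnion_piFinset :
    signVecs n ℓ ⊆ (((Finset.univ : Finset (Fin n)).powersetCard ℓ).biUnion fun S =>
      Fintype.piFinset fun i => if i ∈ S then ({1, -1} : Finset ℝ) else {0} :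
        Finset (Fin n → ℝ)) := by
  intro v hv
  simp only [Finset.coe_biUnion, Set.mem_iUnion, Finset.mem_coe, Fintype.mem_piFinset]
  refine ⟨Finset.univ.filter (v · ≠ 0), ?_, fun i => ?_⟩
  · rw [Finset.mem_powersetCard_univ, ← hv.2, Set.ncard_eq_toFinset_card', Set.toFinset_ofPred]
  · rcases hv.1 i with h | h | h <;> simp [h]

lemma finite_signVecs : (signVecs n ℓ).Finite :=
  (Finset.finite_toSet _).subset signVecs_subset_coe_biUnion_piFinset

lemma choose_mul_two_pow_le (n ℓ : ℕ) : n.choose ℓ * 2 ^ ℓ ≤ 2 * n ^ ℓ := by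
  have two_pow_le : 2 ^ ℓ ≤ 2 * ℓ.factorial := by
    cases ℓ with
    | zero => simp
    | succ k =>
      simpa [pow_succ', add_comm] using Nat.factorial_mul_pow_le_factorial (m := 1) (n := k)
  calc n.choose ℓ * 2 ^ ℓ ≤ n.choose ℓ * (2 * ℓ.factorial) := by gcongr
    _ = 2 * n.descFactorial ℓ := by rw [Nat.descFactorial_eq_factorial_mul_choose]; ring
    _ ≤ 2 * n ^ ℓ := by gcongr; exact Nat.descFactorial_le_pow n ℓ

lemma ncard_signVecs_le : (signVecs n ℓ).ncard ≤ 2 * n ^ ℓ := by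
  refine le_trans ?_ (choose_mul_two_pow_le n ℓ)
  refine (Set.ncard_le_ncard signVecs_subset_coe_biUnion_piFinset
    (Finset.finite_toSet _)).trans ?_
  rw [Set.ncard_coe_finset]
  refine Finset.card_biUnion_le.trans_eq ?_
  calc ∑ S ∈ Finset.univ.powersetCard ℓ,
        (Fintype.piFinset fun i => if i ∈ S then ({1, -1} : Finset ℝ) else {0}).card
      = ∑ S ∈ (Finset.univ : Finset (Fin n)).powersetCard ℓ, 2 ^ ℓ := by
        refine Finset.sum_congr rfl fun S hS => ?_
        have card_fiber (i : Fin n) : (if i ∈ S then ({1, -1} : Finset ℝ) else {0}).card =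
            if i ∈ S then 2 else 1 := by
          split_ifs
          · exact Finset.card_pair (by norm_num)
          · rfl
        simp only [Fintype.card_piFinset, card_fiber, Finset.prod_ite_mem, Finset.univ_inter,
          Finset.prod_const, (Finset.mem_powersetCard.mp hS).2]
    _ = n.choose ℓ * 2 ^ ℓ := by simp

lemma exists_mem_signVecs_mul_le_dotProduct {x : Fin n → ℝ} {b : ℝ}
    (hb : ∀ i, x i ≠ 0 → b ≤ |x i|) (hℓ : ℓ ≤ {i | x i ≠ 0}.ncard) :
    ∃ u ∈ signVecs n ℓ, ℓ * b ≤ x ⬝ᵥ u := by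
  obtain ⟨S, hSx, hS⟩ := Set.exists_subset_card_eq hℓ
  classical
  refine ⟨fun i => if i ∈ S then Real.sign (x i) else 0, ⟨fun i => ?_, ?_⟩, ?_⟩
  · dsimp only
    split_ifs
    · exact Real.sign_apply_eq _
    · exact .inr (.inl rfl)
  · rw [← hS]
    congr 1
    ext i
    simpa [Real.sign_eq_zero_iff] using @hSx i
  · calc ℓ * b = ∑ _i ∈ S.toFinset, b := by
          rw [Finset.sum_const, ← Set.ncard_eq_toFinset_card', hS, nsmul_eq_mul]
      _ ≤ ∑ i ∈ S.toFinset, |x i| :=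
          Finset.sum_le_sum fun i hi => hb i (hSx (Set.mem_toFinset.mp hi))
      _ = x ⬝ᵥ fun i => if i ∈ S then Real.sign (x i) else 0 := by
          simp only [dotProduct, mul_ite, mul_zero, mul_realSign_self, ← Finset.sum_filter,
            Set.filter_mem_univ_eq_toFinset]

lemma one_sub_le_GOE_forall_quadForm_lt {u : Fin n → ℝ} (hu : u ∈ signVecs n ℓ) {t : ℝ}
    (ht : 0 ≤ t) :
    1 - ENNReal.ofReal ((2 * n ^ ℓ + 1) * Real.exp (-(n * t ^ 2 / (4 * ℓ ^ 2)))) ≤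
      GOE n {W | (∀ v ∈ signVecs n ℓ, v ⬝ᵥ W *ᵥ v < t) ∧ -t < u ⬝ᵥ W *ᵥ u} := by
  have := (finite_signVecs (n := n) (ℓ := ℓ)).to_subtype
  let left (o : Option (signVecs n ℓ)) : Fin n → ℝ := o.elim (-u) Subtype.val
  let right (o : Option (signVecs n ℓ)) : Fin n → ℝ := o.elim u Subtype.val
  have norms (o) : (left o ⬝ᵥ left o) * (right o ⬝ᵥ right o) ≤ ((ℓ ^ 2 : NNReal) : ℝ) := by
    rcases o with _ | v
    · simp [left, right, dotProduct_self_of_mem_signVecs hu, sq]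
    · simp [left, right, dotProduct_self_of_mem_signVecs v.2, sq]
  have card_le : (Nat.card (Option (signVecs n ℓ)) : ℝ) ≤ 2 * n ^ ℓ + 1 := by
    rw [Finite.card_option, Nat.card_coe_set_eq]
    exact_mod_cast Nat.succ_le_succ ncard_signVecs_le
  have event_eq : {W | ∀ o, left o ⬝ᵥ W *ᵥ right o < t} =
      {W | (∀ v ∈ signVecs n ℓ, v ⬝ᵥ W *ᵥ v < t) ∧ -t < u ⬝ᵥ W *ᵥ u} := by
    ext W
    simp [Option.forall, left, right, and_comm, neg_lt]
  rw [← event_eq]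
  refine le_trans ?_ (one_sub_le_GOE_forall_dotProduct_mulVec_lt left right norms ht)
  push_cast
  gcongr

lemma one_sub_le_GOE_forall_abs_mulVec_lt {v : Fin n → ℝ} (hv : v ∈ signVecs n ℓ) {t : ℝ}
    (ht : 0 ≤ t) :
    1 - ENNReal.ofReal (2 * n * Real.exp (-(n * t ^ 2 / (4 * ℓ)))) ≤
      GOE n {W | ∀ j, |(W *ᵥ v) j| < t} := by
  let coord : Fin n ⊕ Fin n → Fin n → ℝ := Sum.elim (Pi.single · 1) (Pi.single · (-1))
  have norms (k) : (coord k ⬝ᵥ coord k) * (v ⬝ᵥ v) ≤ ((ℓ : NNReal) : ℝ) := by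
    rcases k with j | j <;> simp [coord, dotProduct_self_of_mem_signVecs hv]
  have event_eq : {W : Matrix (Fin n) (Fin n) ℝ | ∀ k, coord k ⬝ᵥ W *ᵥ v < t} =
      {W | ∀ j, |(W *ᵥ v) j| < t} := by
    ext W
    simp [coord, abs_lt, forall_and, and_comm, neg_lt]
  rw [← event_eq]
  convert one_sub_le_GOE_forall_dotProduct_mulVec_lt coord (fun _ => v) norms ht using 3
  rw [Nat.card_sum, Nat.card_fin]
  push_cast
  ring

end SignVectors

section ThresholdRecovery

variable {ι : Type*}

/-- Hard thresholding followed by the sign: the decision `sign r · 1{|r| > τ}`. -/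
noncomputable def thresholdSign (τ r : ℝ) : ℝ :=
  if τ < |r| then Real.sign r else 0

/-- The estimate `y` has the support of `x` and its signs, up to one global sign. -/
def RecoversSign (x y : ι → ℝ) : Prop :=
  (∀ j, y j ≠ 0 ↔ x j ≠ 0) ∧
    ((∀ j, y j = Real.sign (x j)) ∨ ∀ j, y j = -Real.sign (x j))

lemma thresholdSign_add {τ w a : ℝ} (hw : |w| < τ) (ha : 2 * τ ≤ |a|) :
    thresholdSign τ (w + a) = Real.sign a := by
  have large : τ < |w + a| := by
    have := abs_sub_abs_le_abs_sub a (-w)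
    rw [abs_neg, sub_neg_eq_add, add_comm a w] at this
    linarith
  rw [thresholdSign, if_pos large, realSign_add_of_abs_lt (by linarith [abs_nonneg w])]

lemma recoversSign_of_forall_eq_mul {x y : ι → ℝ} {s : ℝ} (hs : s = -1 ∨ s = 1)
    (hy : ∀ j, y j = s * Real.sign (x j)) : RecoversSign x y := by
  rcases hs with rfl | rfl
  · exact ⟨fun j => by simp [hy, Real.sign_eq_zero_iff], .inr fun j => by simp [hy]⟩
  · exact ⟨fun j => by simp [hy, Real.sign_eq_zero_iff], .inl fun j => by simp [hy]⟩

lemma recoversSign_thresholdSign_add_mul {x w : ι → ℝ} {τ a : ℝ} (ha : a ≠ 0)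
    (hw : ∀ j, |w j| < τ) (hx : ∀ j, x j ≠ 0 → 2 * τ ≤ |a * x j|) :
    RecoversSign x fun j => thresholdSign τ (w j + a * x j) := by
  refine recoversSign_of_forall_eq_mul (Real.sign_apply_eq_of_ne_zero a ha) fun j => ?_
  rw [← realSign_mul]
  by_cases hj : x j = 0
  · simp [hj, thresholdSign, (hw j).le]
  · exact thresholdSign_add (hw j) (hx j hj)

variable [Fintype ι]

lemma spike_mulVec (W : Matrix ι ι ℝ) (c : ℝ) (x v : ι → ℝ) :
    (W + c • vecMulVec x x) *ᵥ v = W *ᵥ v + (c * (x ⬝ᵥ v)) • x := by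
  rw [add_mulVec, smul_mulVec, vecMulVec_mulVec, op_smul_eq_smul, smul_smul]

lemma dotProduct_spike_mulVec (W : Matrix ι ι ℝ) (c : ℝ) (x v : ι → ℝ) :
    v ⬝ᵥ (W + c • vecMulVec x x) *ᵥ v = v ⬝ᵥ W *ᵥ v + c * (x ⬝ᵥ v) ^ 2 := by
  rw [spike_mulVec, dotProduct_add, dotProduct_smul, dotProduct_comm v x, smul_eq_mul]
  ring

lemma sub_lt_mul_sq_dotProduct_of_quadForm_le {W : Matrix ι ι ℝ} {x u v : ι → ℝ} {c m t : ℝ}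
    (hc : 0 ≤ c) (hm : 0 ≤ m) (hxu : m ≤ x ⬝ᵥ u) (hu : -t < u ⬝ᵥ W *ᵥ u) (hv : v ⬝ᵥ W *ᵥ v < t)
    (huv : u ⬝ᵥ (W + c • vecMulVec x x) *ᵥ u ≤ v ⬝ᵥ (W + c • vecMulVec x x) *ᵥ v) :
    c * m ^ 2 - 2 * t < c * (x ⬝ᵥ v) ^ 2 := by
  rw [dotProduct_spike_mulVec, dotProduct_spike_mulVec] at huv
  have : c * m ^ 2 ≤ c * (x ⬝ᵥ u) ^ 2 := by gcongr
  linarith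

lemma recoversSign_of_noise_lt {W₁ W₂ : Matrix ι ι ℝ} {x u v : ι → ℝ} {b c m τ : ℝ}
    (hc : 0 < c) (hm : 0 ≤ m) (hb : 0 ≤ b) (hx : ∀ i, x i ≠ 0 → b ≤ |x i|)
    (hτ : (2 * τ) ^ 2 ≤ c ^ 2 * (m ^ 2 / 2) * b ^ 2) (hxu : m ≤ x ⬝ᵥ u)
    (hu : -(c * m ^ 2 / 4) < u ⬝ᵥ W₁ *ᵥ u) (hv : v ⬝ᵥ W₁ *ᵥ v < c * m ^ 2 / 4)
    (huv : u ⬝ᵥ (W₁ + c • vecMulVec x x) *ᵥ u ≤ v ⬝ᵥ (W₁ + c • vecMulVec x x) *ᵥ v)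
    (hW₂ : ∀ j, |(W₂ *ᵥ v) j| < τ) :
    RecoversSign x fun j => thresholdSign τ (((W₂ + c • vecMulVec x x) *ᵥ v) j) := by
  have overlap : m ^ 2 / 2 < (x ⬝ᵥ v) ^ 2 := by
    have := sub_lt_mul_sq_dotProduct_of_quadForm_le hc.le hm hxu hu hv huv
    exact lt_of_mul_lt_mul_left (by linarith) hc.le
  have signal (j) (hj : x j ≠ 0) : 2 * τ ≤ |c * (x ⬝ᵥ v) * x j| := by
    refine abs_le_of_sq_le_sq' ?_ (abs_nonneg _) |>.2
    calc (2 * τ) ^ 2 ≤ c ^ 2 * (m ^ 2 / 2) * b ^ 2 := hτ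
      _ ≤ c ^ 2 * (x ⬝ᵥ v) ^ 2 * |x j| ^ 2 := by gcongr; exact hx j hj
      _ = |c * (x ⬝ᵥ v) * x j| ^ 2 := by simp only [sq_abs, mul_pow]
  have nonzero : c * (x ⬝ᵥ v) ≠ 0 := by
    refine mul_ne_zero hc.ne' fun h => ?_
    rw [h] at overlap
    linarith [sq_nonneg m]
  simpa only [spike_mulVec, Pi.add_apply, Pi.smul_apply, smul_eq_mul]
    using recoversSign_thresholdSign_add_mul nonzero hW₂ signal

end ThresholdRecovery

section SupportRecovery

variable {n ℓ : ℕ} {lam b : ℝ} {x : Fin n → ℝ}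

lemma failure_probability_le {X : ℝ} (hℓ : 0 < ℓ) (hX : 338 * Real.log n ≤ X)
    (hexp : 4 * Real.exp (-(X / 288)) ≤ 1) :
    (2 * n ^ ℓ + 1) * Real.exp (-(ℓ * X / 128)) + 2 * n * Real.exp (-(X / 64)) ≤
      4 * Real.exp (-(X / 288)) := by
  -- The constants fit because `1/128 - 1/338 ≥ 1/288` and `1/64 - 1/338 ≥ 2/288`.
  have one_le : (1 : ℝ) ≤ ℓ := by exact_mod_cast hℓ
  have X_nonneg : 0 ≤ X := (mul_nonneg (by norm_num) (Real.log_natCast_nonneg n)).trans hX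
  have le_ℓX : X ≤ ℓ * X := le_mul_of_one_le_left X_nonneg one_le
  have n_le : (n : ℝ) ≤ Real.exp (X / 338) :=
    (Real.le_exp_log _).trans (Real.exp_le_exp.mpr (by linarith))
  have search : n ^ ℓ * Real.exp (-(ℓ * X / 128)) ≤ Real.exp (-(X / 288)) := by
    calc n ^ ℓ * Real.exp (-(ℓ * X / 128))
        ≤ Real.exp (X / 338) ^ ℓ * Real.exp (-(ℓ * X / 128)) := by gcongr
      _ = Real.exp (ℓ * (X / 338) + -(ℓ * X / 128)) := by rw [← Real.exp_nat_mul, Real.exp_add]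
      _ ≤ Real.exp (-(X / 288)) := Real.exp_le_exp.mpr (by linarith)
  have planted : Real.exp (-(ℓ * X / 128)) ≤ Real.exp (-(X / 288)) :=
    Real.exp_le_exp.mpr (by linarith)
  have threshold : n * Real.exp (-(X / 64)) ≤ Real.exp (-(X / 288)) * (1 / 4) := by
    calc n * Real.exp (-(X / 64)) ≤ Real.exp (X / 338) * Real.exp (-(X / 64)) := by gcongr
      _ = Real.exp (X / 338 + -(X / 64)) := (Real.exp_add _ _).symm
      _ ≤ Real.exp (-(X / 288) + -(X / 288)) := Real.exp_le_exp.mpr (by linarith)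
      _ = Real.exp (-(X / 288)) * Real.exp (-(X / 288)) := Real.exp_add _ _
      _ ≤ Real.exp (-(X / 288)) * (1 / 4) := by gcongr; linarith
  linarith [Real.exp_pos (-(X / 288))]

lemma one_sub_le_GOE_prod_recoversSign (hlam : 0 < lam) (hb : 0 ≤ b) (hℓ : 0 < ℓ)
    (hx : ∀ i, x i ≠ 0 → b ≤ |x i|) (hcard : ℓ ≤ {i | x i ≠ 0}.ncard)
    {vstar : Matrix (Fin n) (Fin n) ℝ → Fin n → ℝ}
    (hvstar : ∀ M, vstar M ∈ signVecs n ℓ ∧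
      ∀ v ∈ signVecs n ℓ, v ⬝ᵥ M *ᵥ v ≤ vstar M ⬝ᵥ M *ᵥ vstar M) :
    1 - ENNReal.ofReal
        ((2 * n ^ ℓ + 1) * Real.exp (-(ℓ * (lam ^ 2 * ℓ * n * b ^ 4) / 128)) +
          2 * n * Real.exp (-(lam ^ 2 * ℓ * n * b ^ 4 / 64))) ≤
      ((GOE n).prod (GOE n)) {q | RecoversSign x fun j => thresholdSign (lam * ℓ * b ^ 2 / 4)
        (((q.2 + ((√2)⁻¹ * lam) • vecMulVec x x) *ᵥ
          vstar (q.1 + ((√2)⁻¹ * lam) • vecMulVec x x)) j)} := by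
  set c := (√2)⁻¹ * lam with hc
  set τ := lam * ℓ * b ^ 2 / 4 with hτ
  have c_pos : 0 < c := by positivity
  have c_sq : c ^ 2 = lam ^ 2 / 2 := by
    rw [hc, mul_pow, inv_pow, Real.sq_sqrt zero_le_two]
    ring
  obtain ⟨u, hu, hxu⟩ := exists_mem_signVecs_mul_le_dotProduct hx hcard
  have first_stage := one_sub_le_GOE_forall_quadForm_lt hu
    (show 0 ≤ c * (ℓ * b) ^ 2 / 4 by positivity)
  have second_stage (W : Matrix (Fin n) (Fin n) ℝ) :=
    one_sub_le_GOE_forall_abs_mulVec_lt (hvstar (W + c • vecMulVec x x)).1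
      (show 0 ≤ τ by positivity)
  have first_exponent : n * (c * (ℓ * b) ^ 2 / 4) ^ 2 / (4 * ℓ ^ 2) =
      ℓ * (lam ^ 2 * ℓ * n * b ^ 4) / 128 := by
    rw [div_pow, mul_pow, c_sq]
    field_simp
    ring
  have second_exponent : n * τ ^ 2 / (4 * ℓ) = lam ^ 2 * ℓ * n * b ^ 4 / 64 := by
    rw [hτ]
    field_simp
    ring
  rw [first_exponent] at first_stage
  simp only [second_exponent] at second_stage
  rw [ENNReal.ofReal_add (by positivity) (by positivity)]
  refine (one_sub_add_le_measure_prod_setOf_mem _ _ first_stage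
    fun W _ => second_stage W).trans (measure_mono ?_)
  rintro ⟨W₁, W₂⟩ ⟨⟨search, planted⟩, threshold⟩
  obtain ⟨mem, maximal⟩ := hvstar (W₁ + c • vecMulVec x x)
  refine recoversSign_of_noise_lt c_pos (m := ℓ * b) (by positivity) hb hx ?_ hxu planted
    (search _ mem) (maximal u hu) threshold
  rw [c_sq, hτ]
  exact le_of_eq (by ring)

theorem wigner_support_sign_recovery_general (hlam : 0 < lam) (hb : 0 ≤ b) (hℓ : 0 < ℓ)
    (hx : ∀ i, x i ≠ 0 → b ≤ |x i|) (hcard : ℓ ≤ {i | x i ≠ 0}.ncard)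
    (hsnr : 338 * Real.log n ≤ lam ^ 2 * ℓ * n * b ^ 4)
    {vstar : Matrix (Fin n) (Fin n) ℝ → Fin n → ℝ}
    (hvstar : ∀ M, vstar M ∈ signVecs n ℓ ∧
      ∀ v ∈ signVecs n ℓ, v ⬝ᵥ M *ᵥ v ≤ vstar M ⬝ᵥ M *ᵥ vstar M) :
    1 - ENNReal.ofReal (4 * Real.exp (-(lam ^ 2 * ℓ * n * b ^ 4 / 288))) ≤
      ((GOE n).prod (GOE n)) {p | RecoversSign x fun j => thresholdSign (lam * ℓ * b ^ 2 / 4)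
        ((((√2)⁻¹ • (p.1 + lam • vecMulVec x x - p.2)) *ᵥ
          vstar ((√2)⁻¹ • (p.1 + lam • vecMulVec x x + p.2))) j)} := by
  rcases le_total 1 (4 * Real.exp (-(lam ^ 2 * ℓ * n * b ^ 4 / 288))) with vacuous | hexp
  · rw [tsub_eq_zero_of_le (ENNReal.one_le_ofReal.mpr vacuous)]
    exact zero_le
  rw [← GOE_prod_preimage_hadamardTransform]
  refine (tsub_le_tsub_left (ENNReal.ofReal_le_ofReal
    (failure_probability_le hℓ hsnr hexp)) 1).trans ((one_sub_le_GOE_prod_recoversSign hlam hb hℓ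
      hx hcard hvstar).trans_eq (congrArg _ ?_))
  ext q
  have split := hadamardTransform_add_diag_left (hadamardTransform q) (lam • vecMulVec x x)
  rw [hadamardTransform_involutive, smul_smul] at split
  have sum_eq := congrArg Prod.fst split
  have diff_eq := congrArg Prod.snd split
  simp only [hadamardTransform, Prod.fst_add, Prod.snd_add, add_zero] at sum_eq diff_eq
  simp only [Set.mem_preimage, Set.mem_ofPred_eq, hadamardTransform, sum_eq, diff_eq]

end SupportRecovery

section FlatnessLevel

lemma one_div_mul_sqrt_sq (A : ℝ) {k : ℝ} (hk : 0 ≤ k) :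
    (1 / (A * √k)) ^ 2 = 1 / (A ^ 2 * k) := by
  rw [div_pow, mul_pow, one_pow, Real.sq_sqrt hk]

variable {A ρ N : ℝ}

lemma threshold_at_flatness_level (hρ : 0 < ρ) (hN : 0 < N) (lam L : ℝ) :
    lam * L * (1 / (A * √(ρ * N))) ^ 2 / 4 = lam * L / (4 * A ^ 2 * ρ * N) := by
  rw [one_div_mul_sqrt_sq A (by positivity)]
  field_simp

lemma signal_to_noise_at_flatness_level (hρ : 0 < ρ) (hN : 0 < N) (lam L : ℝ) :
    lam ^ 2 * L * N * (1 / (A * √(ρ * N))) ^ 4 = lam ^ 2 / A ^ 4 * (L / (ρ ^ 2 * N)) := by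
  rw [show 4 = 2 * 2 from rfl, pow_mul, one_div_mul_sqrt_sq A (by positivity)]
  field_simp

end FlatnessLevel

/-- **Wigner support and sign recovery** (Theorem rec_wgn). Let `Y = W + λxxᵀ` with
`W ~ GOE(n)`, `W̃ ~ GOE(n)` independent, `Y' = (Y+W̃)/√2`, `Y'' = (Y−W̃)/√2`; let
`v*` be any maximizer of `vᵀY'v` over `I_{n,ℓ}`, `z = Y''v*`, and
`x̄ⱼ = sign(zⱼ)·1{|zⱼ| > λℓ/(4A²ρn)}`. Under the stated conditions on `ρ` and `ℓ`,
with probability at least `1 − 4 exp(−(λ²/(288A⁴))·ℓ/(ρ²n))` one has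
`supp(x̄) = supp(x)` and `sign(x̄) = ±sign(x)`. -/
theorem wigner_support_sign_recovery (n : ℕ) (hn : 0 < n)
    (lam A ρ : ℝ) (hlam : 0 < lam) (hA : 1 ≤ A) (hρ0 : 0 < ρ) (hρ1 : ρ ≤ 1)
    (x : Fin n → ℝ) (hx : SparseVec n ρ A x)
    (ℓ : ℕ) (hℓ : 0 < ℓ)
    (hρcond : ρ ≤ lam ^ 2 / (338 * A ^ 4) * (1 / Real.log n))
    (hℓlo : 338 * A ^ 4 / lam ^ 2 * (ρ ^ 2 * n * Real.log n) ≤ (ℓ : ℝ))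
    (hℓhi : (ℓ : ℝ) ≤ ρ * n)
    (vstar : Matrix (Fin n) (Fin n) ℝ → (Fin n → ℝ))
    (hvstar : ∀ M : Matrix (Fin n) (Fin n) ℝ, vstar M ∈ signVecs n ℓ ∧
      ∀ v ∈ signVecs n ℓ, v ⬝ᵥ M.mulVec v ≤ vstar M ⬝ᵥ M.mulVec (vstar M))
    (z : Matrix (Fin n) (Fin n) ℝ × Matrix (Fin n) (Fin n) ℝ → (Fin n → ℝ))
    (hz : ∀ p : Matrix (Fin n) (Fin n) ℝ × Matrix (Fin n) (Fin n) ℝ,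
      z p = ((Real.sqrt 2)⁻¹ • (p.1 + lam • vecMulVec x x - p.2)).mulVec
        (vstar ((Real.sqrt 2)⁻¹ • (p.1 + lam • vecMulVec x x + p.2))))
    (xbar : Matrix (Fin n) (Fin n) ℝ × Matrix (Fin n) (Fin n) ℝ → (Fin n → ℝ))
    (hxbar : ∀ p j, xbar p j =
      if lam * ℓ / (4 * A ^ 2 * ρ * n) < |z p j| then Real.sign (z p j) else 0) :
    1 - ENNReal.ofReal
        (4 * Real.exp (-(lam ^ 2 / (288 * A ^ 4)) * ((ℓ : ℝ) / (ρ ^ 2 * n)))) ≤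
      ((GOE n).prod (GOE n))
        {p | (∀ j, xbar p j ≠ 0 ↔ x j ≠ 0) ∧
          ((∀ j, xbar p j = Real.sign (x j)) ∨ (∀ j, xbar p j = -Real.sign (x j)))} := by
  have n_pos : (0 : ℝ) < n := by exact_mod_cast hn
  have A_pos : 0 < A := by linarith
  have snr_eq := signal_to_noise_at_flatness_level (A := A) hρ0 n_pos lam ℓ
  have snr_ge : 338 * Real.log n ≤ lam ^ 2 * ℓ * n * (1 / (A * √(ρ * n))) ^ 4 := by
    rw [snr_eq, div_mul_div_comm, le_div_iff₀ (by positivity)]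
    rw [div_mul_eq_mul_div, div_le_iff₀ (by positivity)] at hℓlo
    linarith
  have card_ge : ℓ ≤ {i | x i ≠ 0}.ncard := by exact_mod_cast hℓhi.trans_eq hx.2.1.symm
  have recovery := wigner_support_sign_recovery_general hlam (by positivity) hℓ
    (fun i hi => (hx.2.2 i hi).1) card_ge snr_ge hvstar
  rw [snr_eq, threshold_at_flatness_level hρ0 n_pos] at recovery
  convert recovery using 5
  · field_simp
  · simp only [RecoversSign, thresholdSign, hxbar, hz]
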